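/- arXiv:math/9910142 — 5 statements merged into one kernel-verified Lean document; each statement's English description precedes it below -/
import Mathlib

section
/- Let α ∈ ℝ, let D ⊆ ℝ² be open, and let u : ℝ² → ℝ be C² on D and satisfy the Țițeica PDE with parameter α at every point of D. Then for every ε ∈ ℝ the function v(x,y) = u(x, y − ε·x) is C² and satisfies the Țițeica PDE with the same parameter α at every point (x,y) such that (x, y − ε·x) ∈ D. -/
/-- Partial derivative with respect to the first variable. -/
noncomputable def pdx (u : ℝ × ℝ → ℝ) (p : ℝ × ℝ) : ℝ :=
  deriv (fun x => u (x, p.2)) p.1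

/-- Partial derivative with respect to the second variable. -/
noncomputable def pdy (u : ℝ × ℝ → ℝ) (p : ℝ × ℝ) : ℝ :=
  deriv (fun y => u (p.1, y)) p.2

/-- The Țițeica PDE with parameter `α` holds for `u` at the point `p`:
`u_xx · u_yy − u_xy² = α · (x·u_x + y·u_y − u)⁴`. -/
def TiteicaPDE (α : ℝ) (u : ℝ × ℝ → ℝ) (p : ℝ × ℝ) : Prop :=
  pdx (pdx u) p * pdy (pdy u) p - (pdy (pdx u) p) ^ 2
    = α * (p.1 * pdx u p + p.2 * pdy u p - u p) ^ 4

/-!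
The Țițeica equation says that the determinant of the Hessian matrix of `u` at `p` is `α` times the
fourth power of `Du(p) p - u(p)`. Precomposing `u` with a linear map `A` multiplies the determinant
by `(det A)²`; the other side is unchanged because `D(u ∘ A)(p) p = Du(A p)(A p)` by the chain rule.
Thus `A` carries solutions with parameter `α` to solutions with parameter `(det A)² α`, and shears
have determinant one.
-/

open Module

section Hessian

variable {𝕜 E F G : Type*} [NontriviallyNormedField 𝕜] [NormedAddCommGroup E] [NormedSpace 𝕜 E]
  [NormedAddCommGroup F] [NormedSpace 𝕜 F] [NormedAddCommGroup G] [NormedSpace 𝕜 G]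

theorem hasFDerivAt_fderiv {f : E → F} {x : E} (hf : ContDiffAt 𝕜 2 f x) :
    HasFDerivAt (fderiv 𝕜 f) (fderiv 𝕜 (fderiv 𝕜 f) x) x :=
  ((hf.fderiv_right one_add_one_eq_two.le).differentiableAt one_ne_zero).hasFDerivAt

theorem hasFDerivAt_fderiv_apply {f : E → F} {x : E} (hf : ContDiffAt 𝕜 2 f x) (v : E) :
    HasFDerivAt (fun y => fderiv 𝕜 f y v) ((fderiv 𝕜 (fderiv 𝕜 f) x).flip v) x := by
  simpa using (hasFDerivAt_fderiv hf).clm_apply (hasFDerivAt_const v x)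

theorem fderiv_fderiv_comp_continuousLinearMap {f : F → G} (A : E →L[𝕜] F) {x : E}
    (hf : ContDiffAt 𝕜 2 f (A x)) (v w : E) :
    fderiv 𝕜 (fderiv 𝕜 (f ∘ A)) x v w = fderiv 𝕜 (fderiv 𝕜 f) (A x) (A v) (A w) := by
  have hchain : fderiv 𝕜 (f ∘ A) =ᶠ[nhds x] fun y => (fderiv 𝕜 f (A y)).comp A := by
    filter_upwards [A.continuous.continuousAt.eventually (hf.eventually (by simp))] with y hy
    exact ((hy.differentiableAt two_ne_zero).hasFDerivAt.comp y A.hasFDerivAt).fderiv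
  have hderiv :=
    ((hasFDerivAt_fderiv hf).comp x A.hasFDerivAt).clm_comp (hasFDerivAt_const A x)
  rw [hchain.fderiv_eq]
  simpa using! DFunLike.congr_fun (DFunLike.congr_fun hderiv.fderiv v) w

variable {ι : Type*} [Fintype ι] [DecidableEq ι]

/-- The determinant of the Hessian matrix of `f` at `x` in the coordinates of the basis `b`. -/
noncomputable def hessianDet (b : Basis ι 𝕜 E) (f : E → 𝕜) (x : E) : 𝕜 :=
  (LinearMap.BilinForm.toMatrix b (bilinearIteratedFDerivTwo 𝕜 f x)).det

theorem hessianDet_comp_continuousLinearMap (b : Basis ι 𝕜 E) {f : E → 𝕜} (A : E →L[𝕜] E) {x : E}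
    (hf : ContDiffAt 𝕜 2 f (A x)) :
    hessianDet b (f ∘ A) x = A.det ^ 2 * hessianDet b f (A x) := by
  have hpullback : bilinearIteratedFDerivTwo 𝕜 (f ∘ A) x =
      (bilinearIteratedFDerivTwo 𝕜 f (A x)).compl₁₂ (A : E →ₗ[𝕜] E) (A : E →ₗ[𝕜] E) := by
    ext v w
    exact fderiv_fderiv_comp_continuousLinearMap A hf v w
  rw [hessianDet, hpullback, LinearMap.BilinForm.toMatrix, LinearMap.toMatrix₂_compl₁₂ b b,
    Matrix.det_mul, Matrix.det_mul, Matrix.det_transpose, LinearMap.det_toMatrix,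
    hessianDet, LinearMap.BilinForm.toMatrix, ContinuousLinearMap.det]
  ring

end Hessian

section PartialDerivatives

variable {u : ℝ × ℝ → ℝ} {p : ℝ × ℝ} {L : ℝ × ℝ →L[ℝ] ℝ}

theorem pdx_eq_of_hasFDerivAt (h : HasFDerivAt u L p) : pdx u p = L (1, 0) :=
  (h.comp_hasDerivAt_of_eq p.1
    ((hasDerivAt_id p.1).prodMk (hasDerivAt_const p.1 p.2)) rfl).deriv

theorem pdy_eq_of_hasFDerivAt (h : HasFDerivAt u L p) : pdy u p = L (0, 1) :=
  (h.comp_hasDerivAt_of_eq p.2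
    ((hasDerivAt_const p.2 p.1).prodMk (hasDerivAt_id p.2)) rfl).deriv

theorem hasFDerivAt_pdx (hu : ContDiffAt ℝ 2 u p) :
    HasFDerivAt (pdx u) ((fderiv ℝ (fderiv ℝ u) p).flip (1, 0)) p := by
  refine (hasFDerivAt_fderiv_apply hu (1, 0)).congr_of_eventuallyEq ?_
  filter_upwards [hu.eventually (by simp)] with q hq
  exact pdx_eq_of_hasFDerivAt (hq.differentiableAt two_ne_zero).hasFDerivAt

theorem hasFDerivAt_pdy (hu : ContDiffAt ℝ 2 u p) :
    HasFDerivAt (pdy u) ((fderiv ℝ (fderiv ℝ u) p).flip (0, 1)) p := by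
  refine (hasFDerivAt_fderiv_apply hu (0, 1)).congr_of_eventuallyEq ?_
  filter_upwards [hu.eventually (by simp)] with q hq
  exact pdy_eq_of_hasFDerivAt (hq.differentiableAt two_ne_zero).hasFDerivAt

theorem hessianDet_finTwoProd (hu : ContDiffAt ℝ 2 u p) :
    hessianDet (Basis.finTwoProd ℝ) u p =
      pdx (pdx u) p * pdy (pdy u) p - pdy (pdx u) p ^ 2 := by
  have hsymm : fderiv ℝ (fderiv ℝ u) p (1, 0) (0, 1) = fderiv ℝ (fderiv ℝ u) p (0, 1) (1, 0) :=
    (hu.isSymmSndFDerivAt (by simp)).eq (1, 0) (0, 1)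
  rw [pdx_eq_of_hasFDerivAt (hasFDerivAt_pdx hu), pdy_eq_of_hasFDerivAt (hasFDerivAt_pdx hu),
    pdy_eq_of_hasFDerivAt (hasFDerivAt_pdy hu)]
  simp [hessianDet, Matrix.det_fin_two, bilinearIteratedFDerivTwo, hsymm, sq]

theorem fderiv_apply_eq_pdx_add_pdy (hu : DifferentiableAt ℝ u p) (v : ℝ × ℝ) :
    fderiv ℝ u p v = v.1 * pdx u p + v.2 * pdy u p := by
  have hv : v = v.1 • ((1 : ℝ), (0 : ℝ)) + v.2 • ((0 : ℝ), (1 : ℝ)) := by ext <;> simp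
  rw [pdx_eq_of_hasFDerivAt hu.hasFDerivAt, pdy_eq_of_hasFDerivAt hu.hasFDerivAt]
  simpa only [map_add, map_smul, smul_eq_mul] using congrArg (fderiv ℝ u p) hv

end PartialDerivatives

theorem titeicaPDE_iff_hessianDet_eq {α : ℝ} {u : ℝ × ℝ → ℝ} {p : ℝ × ℝ}
    (hu : ContDiffAt ℝ 2 u p) :
    TiteicaPDE α u p ↔
      hessianDet (Basis.finTwoProd ℝ) u p = α * (fderiv ℝ u p p - u p) ^ 4 := by
  rw [TiteicaPDE, hessianDet_finTwoProd hu,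
    fderiv_apply_eq_pdx_add_pdy (hu.differentiableAt two_ne_zero)]

theorem TiteicaPDE.comp_continuousLinearMap {α : ℝ} {u : ℝ × ℝ → ℝ} {p : ℝ × ℝ}
    (A : ℝ × ℝ →L[ℝ] ℝ × ℝ) (hu : ContDiffAt ℝ 2 u (A p)) (h : TiteicaPDE α u (A p)) :
    TiteicaPDE (A.det ^ 2 * α) (u ∘ A) p := by
  have heuler : fderiv ℝ (u ∘ A) p p = fderiv ℝ u (A p) (A p) := by
    rw [((hu.differentiableAt two_ne_zero).hasFDerivAt.comp p A.hasFDerivAt).fderiv,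
      ContinuousLinearMap.comp_apply]
  rw [titeicaPDE_iff_hessianDet_eq (hu.comp p A.contDiff.contDiffAt),
    hessianDet_comp_continuousLinearMap _ A hu, (titeicaPDE_iff_hessianDet_eq hu).mp h, heuler,
    Function.comp_apply, mul_assoc]

/-- The shear `(x, y) ↦ (x, y - ε x)` of the plane, the flow of `x ∂/∂y` at time `-ε`. -/
noncomputable def shear (ε : ℝ) : ℝ × ℝ →L[ℝ] ℝ × ℝ :=
  LinearMap.toContinuousLinearMap (LinearMap.transvection (LinearMap.fst ℝ ℝ ℝ) (0, -ε))

theorem shear_apply (ε : ℝ) (p : ℝ × ℝ) : shear ε p = (p.1, p.2 - ε * p.1) := by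
  ext <;> simp [shear, LinearMap.transvection.apply, sub_eq_add_neg, mul_comm]

theorem det_shear (ε : ℝ) : (shear ε).det = 1 := by
  simp [shear, LinearMap.transvection.det]

/-- The shear group generated by `X₅ = x ∂/∂y` is a symmetry group of the Țițeica PDE:
if `u` is a C² solution on the open set `D`, then for every `ε` the function
`v(x,y) = u(x, y − ε·x)` is C² and solves the PDE wherever `(x, y − ε·x) ∈ D`. -/
theorem titeica_symmetry_X5 (α ε : ℝ) (D : Set (ℝ × ℝ)) (hD : IsOpen D)
    (u : ℝ × ℝ → ℝ) (hu : ContDiffOn ℝ 2 u D)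
    (hsol : ∀ p ∈ D, TiteicaPDE α u p) :
    ContDiffOn ℝ 2 (fun p : ℝ × ℝ => u (p.1, p.2 - ε * p.1))
      {p : ℝ × ℝ | (p.1, p.2 - ε * p.1) ∈ D} ∧
    ∀ p : ℝ × ℝ, (p.1, p.2 - ε * p.1) ∈ D →
      TiteicaPDE α (fun q : ℝ × ℝ => u (q.1, q.2 - ε * q.1)) p := by
  simp only [← shear_apply]
  refine ⟨hu.comp (shear ε).contDiff.contDiffOn fun p hp => hp, fun p hp => ?_⟩
  have hup : ContDiffAt ℝ 2 u (shear ε p) := hu.contDiffAt (hD.mem_nhds hp)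
  simpa only [det_shear, one_pow, one_mul] using!
    (hsol _ hp).comp_continuousLinearMap (shear ε) hup
end

section
/- Let α ∈ ℝ, let D ⊆ ℝ² be open, and let u : ℝ² → ℝ be C² on D and satisfy the Țițeica PDE with parameter α at every point of D. Then for every ε ∈ ℝ the function v(x,y) = u(x,y) + ε·x is C² and satisfies the Țițeica PDE with the same parameter α at every point of D. -/
/-!
Adding a linear form `ℓ` to `u` shifts the gradient by a constant, so it leaves the second partial
derivatives, hence the left-hand side of the equation, unchanged. The right-hand side depends on
`x·u_x + y·u_y − u`, which is unchanged too, because Euler's identity `x·ℓ_x + y·ℓ_y = ℓ` holds for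
a form homogeneous of degree one. The symmetry `X₇` is the case `ℓ(x, y) = ε·x`.
-/

open Filter Topology

section PartialDerivatives

variable {u v : ℝ × ℝ → ℝ} {p : ℝ × ℝ}

theorem pdx_eq_fderiv_apply (hu : DifferentiableAt ℝ u p) : pdx u p = fderiv ℝ u p (1, 0) :=
  (hu.hasFDerivAt.comp_hasDerivAt p.1
    ((hasDerivAt_id p.1).prodMk (hasDerivAt_const p.1 p.2))).deriv

theorem pdy_eq_fderiv_apply (hu : DifferentiableAt ℝ u p) : pdy u p = fderiv ℝ u p (0, 1) :=
  (hu.hasFDerivAt.comp_hasDerivAt p.2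
    ((hasDerivAt_const p.2 p.1).prodMk (hasDerivAt_id p.2))).deriv

theorem pdx_congr_of_eventuallyEq (h : u =ᶠ[𝓝 p] v) : pdx u p = pdx v p :=
  have hline : Tendsto (fun x : ℝ => (x, p.2)) (𝓝 p.1) (𝓝 p) :=
    (Continuous.prodMk_left p.2).tendsto p.1
  (h.comp_tendsto hline).deriv_eq

theorem pdy_congr_of_eventuallyEq (h : u =ᶠ[𝓝 p] v) : pdy u p = pdy v p :=
  have hline : Tendsto (fun y : ℝ => (p.1, y)) (𝓝 p.2) (𝓝 p) :=
    (Continuous.prodMk_right p.1).tendsto p.2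
  (h.comp_tendsto hline).deriv_eq

theorem pdx_add_const (u : ℝ × ℝ → ℝ) (c : ℝ) (p : ℝ × ℝ) :
    pdx (fun q => u q + c) p = pdx u p :=
  deriv_add_const c

theorem pdy_add_const (u : ℝ × ℝ → ℝ) (c : ℝ) (p : ℝ × ℝ) :
    pdy (fun q => u q + c) p = pdy u p :=
  deriv_add_const c

end PartialDerivatives

section AddLinearForm

variable {u : ℝ × ℝ → ℝ} {p : ℝ × ℝ}

theorem pdx_add_continuousLinearMap (hu : DifferentiableAt ℝ u p) (ℓ : ℝ × ℝ →L[ℝ] ℝ) :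
    pdx (fun q => u q + ℓ q) p = pdx u p + ℓ (1, 0) := by
  rw [pdx_eq_fderiv_apply (hu.fun_add ℓ.differentiableAt), pdx_eq_fderiv_apply hu,
    fderiv_fun_add hu ℓ.differentiableAt, ℓ.fderiv, add_apply]

theorem pdy_add_continuousLinearMap (hu : DifferentiableAt ℝ u p) (ℓ : ℝ × ℝ →L[ℝ] ℝ) :
    pdy (fun q => u q + ℓ q) p = pdy u p + ℓ (0, 1) := by
  rw [pdy_eq_fderiv_apply (hu.fun_add ℓ.differentiableAt), pdy_eq_fderiv_apply hu,
    fderiv_fun_add hu ℓ.differentiableAt, ℓ.fderiv, add_apply]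

theorem pdx_pdx_add_continuousLinearMap (hu : ∀ᶠ q in 𝓝 p, DifferentiableAt ℝ u q)
    (ℓ : ℝ × ℝ →L[ℝ] ℝ) : pdx (pdx fun q => u q + ℓ q) p = pdx (pdx u) p :=
  (pdx_congr_of_eventuallyEq (hu.mono fun _ hq => pdx_add_continuousLinearMap hq ℓ)).trans
    (pdx_add_const (pdx u) (ℓ (1, 0)) p)

theorem pdy_pdx_add_continuousLinearMap (hu : ∀ᶠ q in 𝓝 p, DifferentiableAt ℝ u q)
    (ℓ : ℝ × ℝ →L[ℝ] ℝ) : pdy (pdx fun q => u q + ℓ q) p = pdy (pdx u) p :=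
  (pdy_congr_of_eventuallyEq (hu.mono fun _ hq => pdx_add_continuousLinearMap hq ℓ)).trans
    (pdy_add_const (pdx u) (ℓ (1, 0)) p)

theorem pdy_pdy_add_continuousLinearMap (hu : ∀ᶠ q in 𝓝 p, DifferentiableAt ℝ u q)
    (ℓ : ℝ × ℝ →L[ℝ] ℝ) : pdy (pdy fun q => u q + ℓ q) p = pdy (pdy u) p :=
  (pdy_congr_of_eventuallyEq (hu.mono fun _ hq => pdy_add_continuousLinearMap hq ℓ)).trans
    (pdy_add_const (pdy u) (ℓ (0, 1)) p)

theorem fst_mul_apply_add_snd_mul_apply (ℓ : ℝ × ℝ →L[ℝ] ℝ) (p : ℝ × ℝ) :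
    p.1 * ℓ (1, 0) + p.2 * ℓ (0, 1) = ℓ p := by
  have hp : p.1 • ((1 : ℝ), (0 : ℝ)) + p.2 • ((0 : ℝ), (1 : ℝ)) = p := by ext <;> simp
  simpa only [map_add, map_smul, smul_eq_mul] using congrArg ℓ hp

theorem fst_mul_pdx_add_snd_mul_pdy_sub_add_continuousLinearMap (hu : DifferentiableAt ℝ u p)
    (ℓ : ℝ × ℝ →L[ℝ] ℝ) :
    p.1 * pdx (fun q => u q + ℓ q) p + p.2 * pdy (fun q => u q + ℓ q) p - (u p + ℓ p) =
      p.1 * pdx u p + p.2 * pdy u p - u p := by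
  rw [pdx_add_continuousLinearMap hu, pdy_add_continuousLinearMap hu]
  linear_combination fst_mul_apply_add_snd_mul_apply ℓ p

theorem titeicaPDE_add_continuousLinearMap_iff {α : ℝ}
    (hu : ∀ᶠ q in 𝓝 p, DifferentiableAt ℝ u q) (ℓ : ℝ × ℝ →L[ℝ] ℝ) :
    TiteicaPDE α (fun q => u q + ℓ q) p ↔ TiteicaPDE α u p := by
  unfold TiteicaPDE
  rw [pdx_pdx_add_continuousLinearMap hu, pdy_pdy_add_continuousLinearMap hu,
    pdy_pdx_add_continuousLinearMap hu,
    fst_mul_pdx_add_snd_mul_pdy_sub_add_continuousLinearMap hu.self_of_nhds]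

end AddLinearForm

theorem titeica_symmetry_X7_general {α : ℝ} {D : Set (ℝ × ℝ)} (hD : IsOpen D)
    {u : ℝ × ℝ → ℝ} (hu : ContDiffOn ℝ 2 u D) (hsol : ∀ p ∈ D, TiteicaPDE α u p)
    (ℓ : ℝ × ℝ →L[ℝ] ℝ) :
    ContDiffOn ℝ 2 (fun p => u p + ℓ p) D ∧ ∀ p ∈ D, TiteicaPDE α (fun q => u q + ℓ q) p := by
  refine ⟨hu.add ℓ.contDiff.contDiffOn, fun p hp => ?_⟩
  have hdiff : ∀ᶠ q in 𝓝 p, DifferentiableAt ℝ u q :=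
    (hu.differentiableOn two_ne_zero).eventually_differentiableAt (hD.mem_nhds hp)
  exact (titeicaPDE_add_continuousLinearMap_iff hdiff ℓ).mpr (hsol p hp)

/-- The group generated by `X₇ = x ∂/∂u` is a symmetry group of the Țițeica PDE:
if `u` is a C² solution on the open set `D`, then for every `ε` the function
`v(x,y) = u(x,y) + ε·x` is C² on `D` and solves the PDE at every point of `D`. -/
theorem titeica_symmetry_X7 (α ε : ℝ) (D : Set (ℝ × ℝ)) (hD : IsOpen D)
    (u : ℝ × ℝ → ℝ) (hu : ContDiffOn ℝ 2 u D)
    (hsol : ∀ p ∈ D, TiteicaPDE α u p) :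
    ContDiffOn ℝ 2 (fun p : ℝ × ℝ => u p + ε * p.1) D ∧
    ∀ p ∈ D, TiteicaPDE α (fun q : ℝ × ℝ => u q + ε * q.1) p :=
  titeica_symmetry_X7_general hD hu hsol (ε • ContinuousLinearMap.fst ℝ ℝ ℝ)
end

section
/- Let α ∈ ℝ, let D ⊆ ℝ² be open, and let u : ℝ² → ℝ be C⁴ on D with x·u_x + y·u_y − u ≠ 0 on D, satisfying the Țițeica PDE with parameter α at every point of D. Define w = x·u_x + y·u_y − u and the functions P¹(x,y) = −α·y·u + u_x·(u_xy·(y·u_y − u) − y·u_x·u_yy)/w⁴ and P²(x,y) = −u_x·(u_xx·(y·u_y − u) − y·u_x·u_xy)/w⁴ on D. Then ∂P¹/∂x + ∂P²/∂y = 0 at every point of D. -/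
/-!
Let `w = x u_x + y u_y − u` and `{f, g} = f_x g_y − f_y g_x`. Since `y u_y − u = w − x u_x`,
while `w_x = x u_xx + y u_xy` and `w_y = x u_xy + y u_yy`, the pair `(P¹ + α y u, P²)` equals
`(k v_y, −k v_x)` with `k = u_x / w²` and `v = u_x / w`. By equality of mixed partials the
divergence of the latter is `{k, v} = u_x / w⁴ · {u_x, w} = y u_x (u_xx u_yy − u_xy²) / w⁴`.
Hence the divergence of `(P¹, P²)` is the characteristic `y u_x` times
`(u_xx u_yy − u_xy²) / w⁴ − α`.
-/

open Filter Topology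

section PartialDerivatives

variable {f g : ℝ × ℝ → ℝ} {p : ℝ × ℝ}

lemma hasDerivAt_fderiv_fst (hf : DifferentiableAt ℝ f p) :
    HasDerivAt (fun x => f (x, p.2)) (fderiv ℝ f p (1, 0)) p.1 :=
  HasFDerivAt.comp_hasDerivAt (f := fun x : ℝ => (x, p.2)) p.1 hf.hasFDerivAt
    ((hasDerivAt_id' p.1).prodMk (hasDerivAt_const p.1 p.2))

lemma hasDerivAt_fderiv_snd (hf : DifferentiableAt ℝ f p) :
    HasDerivAt (fun y => f (p.1, y)) (fderiv ℝ f p (0, 1)) p.2 :=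
  HasFDerivAt.comp_hasDerivAt (f := fun y : ℝ => (p.1, y)) p.2 hf.hasFDerivAt
    ((hasDerivAt_const p.2 p.1).prodMk (hasDerivAt_id' p.2))

lemma pdx_eq_fderiv (hf : DifferentiableAt ℝ f p) : pdx f p = fderiv ℝ f p (1, 0) :=
  (hasDerivAt_fderiv_fst hf).deriv

lemma pdy_eq_fderiv (hf : DifferentiableAt ℝ f p) : pdy f p = fderiv ℝ f p (0, 1) :=
  (hasDerivAt_fderiv_snd hf).deriv

lemma hasDerivAt_pdx (hf : DifferentiableAt ℝ f p) :
    HasDerivAt (fun x => f (x, p.2)) (pdx f p) p.1 :=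
  (hasDerivAt_fderiv_fst hf).differentiableAt.hasDerivAt

lemma hasDerivAt_pdy (hf : DifferentiableAt ℝ f p) :
    HasDerivAt (fun y => f (p.1, y)) (pdy f p) p.2 :=
  (hasDerivAt_fderiv_snd hf).differentiableAt.hasDerivAt

lemma pdx_congr (h : f =ᶠ[𝓝 p] g) : pdx f p = pdx g p :=
  have hp : Tendsto (fun x => (x, p.2)) (𝓝 p.1) (𝓝 p) :=
    Continuous.tendsto' (by fun_prop) _ _ rfl
  (h.comp_tendsto hp).deriv_eq

lemma pdy_congr (h : f =ᶠ[𝓝 p] g) : pdy f p = pdy g p :=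
  have hp : Tendsto (fun y => (p.1, y)) (𝓝 p.2) (𝓝 p) :=
    Continuous.tendsto' (by fun_prop) _ _ rfl
  (h.comp_tendsto hp).deriv_eq

lemma pdx_mul (hf : DifferentiableAt ℝ f p) (hg : DifferentiableAt ℝ g p) :
    pdx (fun q => f q * g q) p = pdx f p * g p + f p * pdx g p :=
  ((hasDerivAt_pdx hf).fun_mul (hasDerivAt_pdx hg)).deriv

lemma pdy_mul (hf : DifferentiableAt ℝ f p) (hg : DifferentiableAt ℝ g p) :
    pdy (fun q => f q * g q) p = pdy f p * g p + f p * pdy g p :=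
  ((hasDerivAt_pdy hf).fun_mul (hasDerivAt_pdy hg)).deriv

lemma pdx_pow (hf : DifferentiableAt ℝ f p) (n : ℕ) :
    pdx (fun q => f q ^ n) p = n * f p ^ (n - 1) * pdx f p :=
  ((hasDerivAt_pdx hf).fun_pow n).deriv

lemma pdy_pow (hf : DifferentiableAt ℝ f p) (n : ℕ) :
    pdy (fun q => f q ^ n) p = n * f p ^ (n - 1) * pdy f p :=
  ((hasDerivAt_pdy hf).fun_pow n).deriv

lemma pdx_div (hf : DifferentiableAt ℝ f p) (hg : DifferentiableAt ℝ g p) (h₀ : g p ≠ 0) :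
    pdx (fun q => f q / g q) p = (pdx f p * g p - f p * pdx g p) / g p ^ 2 :=
  ((hasDerivAt_pdx hf).fun_div (hasDerivAt_pdx hg) h₀).deriv

lemma pdy_div (hf : DifferentiableAt ℝ f p) (hg : DifferentiableAt ℝ g p) (h₀ : g p ≠ 0) :
    pdy (fun q => f q / g q) p = (pdy f p * g p - f p * pdy g p) / g p ^ 2 :=
  ((hasDerivAt_pdy hf).fun_div (hasDerivAt_pdy hg) h₀).deriv

variable {m n : WithTop ℕ∞}

lemma pdx_eventuallyEq_fderiv (hf : ContDiffAt ℝ 1 f p) :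
    pdx f =ᶠ[𝓝 p] fun q => fderiv ℝ f q (1, 0) :=
  (hf.eventually (by simp)).mono fun _ hq => pdx_eq_fderiv (hq.differentiableAt one_ne_zero)

lemma pdy_eventuallyEq_fderiv (hf : ContDiffAt ℝ 1 f p) :
    pdy f =ᶠ[𝓝 p] fun q => fderiv ℝ f q (0, 1) :=
  (hf.eventually (by simp)).mono fun _ hq => pdy_eq_fderiv (hq.differentiableAt one_ne_zero)

lemma contDiffAt_pdx (hf : ContDiffAt ℝ n f p) (hmn : m + 1 ≤ n) : ContDiffAt ℝ m (pdx f) p :=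
  ((hf.fderiv_right hmn).clm_apply contDiffAt_const).congr_of_eventuallyEq <|
    pdx_eventuallyEq_fderiv <| hf.of_le <| le_add_self.trans hmn

lemma contDiffAt_pdy (hf : ContDiffAt ℝ n f p) (hmn : m + 1 ≤ n) : ContDiffAt ℝ m (pdy f) p :=
  ((hf.fderiv_right hmn).clm_apply contDiffAt_const).congr_of_eventuallyEq <|
    pdy_eventuallyEq_fderiv <| hf.of_le <| le_add_self.trans hmn

lemma differentiableAt_pdx (hf : ContDiffAt ℝ 2 f p) : DifferentiableAt ℝ (pdx f) p :=
  (contDiffAt_pdx (m := 1) hf (by norm_num)).differentiableAt one_ne_zero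

lemma differentiableAt_pdy (hf : ContDiffAt ℝ 2 f p) : DifferentiableAt ℝ (pdy f) p :=
  (contDiffAt_pdy (m := 1) hf (by norm_num)).differentiableAt one_ne_zero

lemma pdx_pdy_comm (hf : ContDiffAt ℝ 2 f p) : pdx (pdy f) p = pdy (pdx f) p := by
  have hf₁ : ContDiffAt ℝ 1 f p := hf.of_le one_le_two
  have hf' : DifferentiableAt ℝ (fderiv ℝ f) p :=
    (hf.fderiv_right (m := 1) (by norm_num)).differentiableAt one_ne_zero
  have hsymm : IsSymmSndFDerivAt ℝ f p := hf.isSymmSndFDerivAt (by simp)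
  have fderiv_apply (v : ℝ × ℝ) : fderiv ℝ (fun q => fderiv ℝ f q v) p
      = (fderiv ℝ (fderiv ℝ f) p).flip v := by
    rw [fderiv_clm_apply hf' (differentiableAt_const v)]
    simp
  calc pdx (pdy f) p
      = pdx (fun q => fderiv ℝ f q (0, 1)) p := pdx_congr (pdy_eventuallyEq_fderiv hf₁)
    _ = fderiv ℝ (fderiv ℝ f) p (1, 0) (0, 1) := by
      rw [pdx_eq_fderiv (hf'.clm_apply (differentiableAt_const _)), fderiv_apply,
        ContinuousLinearMap.flip_apply]
    _ = fderiv ℝ (fderiv ℝ f) p (0, 1) (1, 0) := hsymm.eq _ _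
    _ = pdy (fun q => fderiv ℝ f q (1, 0)) p := by
      rw [pdy_eq_fderiv (hf'.clm_apply (differentiableAt_const _)), fderiv_apply,
        ContinuousLinearMap.flip_apply]
    _ = pdy (pdx f) p := (pdy_congr (pdx_eventuallyEq_fderiv hf₁)).symm

end PartialDerivatives

section PoissonBracket

variable {f g : ℝ × ℝ → ℝ} {p : ℝ × ℝ}

/-- The canonical Poisson bracket `{f, g} = f_x g_y − f_y g_x` on the plane, i.e. the Jacobian
determinant of `(f, g)`. For `g` of class `C²` it is the divergence of `(f g_y, −f g_x)`. -/
noncomputable def poissonBracket (f g : ℝ × ℝ → ℝ) (p : ℝ × ℝ) : ℝ :=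
  pdx f p * pdy g p - pdy f p * pdx g p

lemma pdx_mul_pdy_sub_pdy_mul_pdx (hf : DifferentiableAt ℝ f p) (hg : ContDiffAt ℝ 2 g p) :
    pdx (fun q => f q * pdy g q) p - pdy (fun q => f q * pdx g q) p = poissonBracket f g p := by
  rw [pdx_mul hf (differentiableAt_pdy hg), pdy_mul hf (differentiableAt_pdx hg),
    pdx_pdy_comm hg, poissonBracket]
  ring

lemma poissonBracket_div_sq_div (hf : DifferentiableAt ℝ f p) (hg : DifferentiableAt ℝ g p)
    (h₀ : g p ≠ 0) :
    poissonBracket (fun q => f q / g q ^ 2) (fun q => f q / g q) p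
      = f p / g p ^ 4 * poissonBracket f g p := by
  simp only [poissonBracket, pdx_div hf hg h₀, pdy_div hf hg h₀,
    pdx_div hf (hg.fun_pow 2) (pow_ne_zero 2 h₀), pdy_div hf (hg.fun_pow 2) (pow_ne_zero 2 h₀),
    pdx_pow hg, pdy_pow hg]
  field_simp
  ring

end PoissonBracket

section Legendre

variable {u : ℝ × ℝ → ℝ} {p : ℝ × ℝ}

/-- The Legendre transform `w = x u_x + y u_y − u`, as a function of the original variables
`(x, y)` rather than of the dual variables `(u_x, u_y)`. -/
noncomputable def legendre (u : ℝ × ℝ → ℝ) (p : ℝ × ℝ) : ℝ :=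
  p.1 * pdx u p + p.2 * pdy u p - u p

lemma snd_mul_pdy_sub_self : p.2 * pdy u p - u p = legendre u p - p.1 * pdx u p := by
  rw [legendre]
  ring

lemma contDiffAt_legendre {m n : WithTop ℕ∞} (hu : ContDiffAt ℝ n u p) (hmn : m + 1 ≤ n) :
    ContDiffAt ℝ m (legendre u) p :=
  ((contDiffAt_fst.mul (contDiffAt_pdx hu hmn)).add
    (contDiffAt_snd.mul (contDiffAt_pdy hu hmn))).sub (hu.of_le (le_self_add.trans hmn))

lemma differentiableAt_legendre (hu : ContDiffAt ℝ 2 u p) : DifferentiableAt ℝ (legendre u) p :=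
  (contDiffAt_legendre (m := 1) hu (by norm_num)).differentiableAt one_ne_zero

lemma pdx_legendre (hu : ContDiffAt ℝ 2 u p) :
    pdx (legendre u) p = p.1 * pdx (pdx u) p + p.2 * pdy (pdx u) p := by
  have h := (((hasDerivAt_id' p.1).fun_mul (hasDerivAt_pdx (differentiableAt_pdx hu))).fun_add
    ((hasDerivAt_pdx (differentiableAt_pdy hu)).const_mul p.2)).fun_sub
      (hasDerivAt_pdx (hu.differentiableAt two_ne_zero))
  refine h.deriv.trans ?_
  rw [pdx_pdy_comm hu]
  ring

lemma pdy_legendre (hu : ContDiffAt ℝ 2 u p) :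
    pdy (legendre u) p = p.1 * pdy (pdx u) p + p.2 * pdy (pdy u) p := by
  have h := (((hasDerivAt_pdy (differentiableAt_pdx hu)).const_mul p.1).fun_add
    ((hasDerivAt_id' p.2).fun_mul (hasDerivAt_pdy (differentiableAt_pdy hu)))).fun_sub
      (hasDerivAt_pdy (hu.differentiableAt two_ne_zero))
  refine h.deriv.trans ?_
  ring

lemma poissonBracket_pdx_legendre (hu : ContDiffAt ℝ 2 u p) :
    poissonBracket (pdx u) (legendre u) p
      = p.2 * (pdx (pdx u) p * pdy (pdy u) p - pdy (pdx u) p ^ 2) := by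
  rw [poissonBracket, pdx_legendre hu, pdy_legendre hu]
  ring

end Legendre

section ConservationLaw

variable {u : ℝ × ℝ → ℝ} {p : ℝ × ℝ}

/-- The flow `P¹` of the Noether conservation law attached to the symmetry `−y ∂/∂x` of the
Țițeica Lagrangian. -/
noncomputable def noetherFlow (α : ℝ) (u : ℝ × ℝ → ℝ) (q : ℝ × ℝ) : ℝ :=
  -α * q.2 * u q +
    pdx u q * (pdy (pdx u) q * (q.2 * pdy u q - u q) - q.2 * pdx u q * pdy (pdy u) q)
      / legendre u q ^ 4

/-- The conserved density `P²` of the Noether conservation law attached to the symmetry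
`−y ∂/∂x` of the Țițeica Lagrangian. -/
noncomputable def noetherDensity (u : ℝ × ℝ → ℝ) (q : ℝ × ℝ) : ℝ :=
  -(pdx u q * (pdx (pdx u) q * (q.2 * pdy u q - u q) - q.2 * pdx u q * pdy (pdx u) q))
    / legendre u q ^ 4

lemma noetherFlow_eq_add_mul_pdy (α : ℝ) (hu : ContDiffAt ℝ 2 u p) (hw : legendre u p ≠ 0) :
    noetherFlow α u p = -α * p.2 * u p +
      pdx u p / legendre u p ^ 2 * pdy (fun q => pdx u q / legendre u q) p := by
  rw [noetherFlow, snd_mul_pdy_sub_self,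
    pdy_div (differentiableAt_pdx hu) (differentiableAt_legendre hu) hw, pdy_legendre hu]
  field_simp
  ring

lemma noetherDensity_eq_neg_mul_pdx (hu : ContDiffAt ℝ 2 u p) (hw : legendre u p ≠ 0) :
    noetherDensity u p =
      -(pdx u p / legendre u p ^ 2 * pdx (fun q => pdx u q / legendre u q) p) := by
  rw [noetherDensity, snd_mul_pdy_sub_self,
    pdx_div (differentiableAt_pdx hu) (differentiableAt_legendre hu) hw, pdx_legendre hu]
  field_simp
  ring

theorem pdx_noetherFlow_add_pdy_noetherDensity (α : ℝ) (hu : ContDiffAt ℝ 3 u p)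
    (hw : legendre u p ≠ 0) :
    pdx (noetherFlow α u) p + pdy (noetherDensity u) p = p.2 * pdx u p *
      ((pdx (pdx u) p * pdy (pdy u) p - pdy (pdx u) p ^ 2) / legendre u p ^ 4 - α) := by
  set k : ℝ × ℝ → ℝ := fun q => pdx u q / legendre u q ^ 2
  set v : ℝ × ℝ → ℝ := fun q => pdx u q / legendre u q
  have hu₂ : ContDiffAt ℝ 2 u p := hu.of_le (by norm_num)
  have hux : ContDiffAt ℝ 2 (pdx u) p := contDiffAt_pdx hu (by norm_num)
  have hw₂ : ContDiffAt ℝ 2 (legendre u) p := contDiffAt_legendre hu (by norm_num)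
  have hk : DifferentiableAt ℝ k p :=
    (hux.div (hw₂.pow 2) (pow_ne_zero 2 hw)).differentiableAt two_ne_zero
  have hv : ContDiffAt ℝ 2 v p := hux.div hw₂ hw
  have hreg : ∀ᶠ q in 𝓝 p, ContDiffAt ℝ 2 u q ∧ legendre u q ≠ 0 :=
    (hu₂.eventually (by simp)).and (hw₂.continuousAt.eventually_ne hw)
  have hflow : pdx (noetherFlow α u) p
      = -α * p.2 * pdx u p + pdx (fun q => k q * pdy v q) p :=
    (pdx_congr (hreg.mono fun _ hq => noetherFlow_eq_add_mul_pdy α hq.1 hq.2)).trans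
      (((hasDerivAt_pdx (hu.differentiableAt three_ne_zero)).const_mul (-α * p.2)).fun_add
        (hasDerivAt_pdx (hk.fun_mul (differentiableAt_pdy hv)))).deriv
  have hdensity : pdy (noetherDensity u) p = -pdy (fun q => k q * pdx v q) p :=
    (pdy_congr (hreg.mono fun _ hq => noetherDensity_eq_neg_mul_pdx hq.1 hq.2)).trans deriv.fun_neg
  calc pdx (noetherFlow α u) p + pdy (noetherDensity u) p
      = -α * p.2 * pdx u p + poissonBracket k v p := by
        rw [hflow, hdensity, ← pdx_mul_pdy_sub_pdy_mul_pdx hk hv]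
        ring
    _ = -α * p.2 * pdx u p + pdx u p / legendre u p ^ 4 *
          (p.2 * (pdx (pdx u) p * pdy (pdy u) p - pdy (pdx u) p ^ 2)) := by
        rw [poissonBracket_div_sq_div (differentiableAt_pdx hu₂)
          (differentiableAt_legendre hu₂) hw, poissonBracket_pdx_legendre hu₂]
    _ = p.2 * pdx u p *
          ((pdx (pdx u) p * pdy (pdy u) p - pdy (pdx u) p ^ 2) / legendre u p ^ 4 - α) := by
        ring

theorem titeica_conservation_law_general {α : ℝ} (hu : ContDiffAt ℝ 3 u p)
    (hw : legendre u p ≠ 0) (hsol : TiteicaPDE α u p) :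
    pdx (noetherFlow α u) p + pdy (noetherDensity u) p = 0 := by
  have hα : (pdx (pdx u) p * pdy (pdy u) p - pdy (pdx u) p ^ 2) / legendre u p ^ 4 = α :=
    (div_eq_iff (pow_ne_zero 4 hw)).2 hsol
  rw [pdx_noetherFlow_add_pdy_noetherDensity α hu hw, hα, sub_self, mul_zero]

end ConservationLaw

/-- Proposition 2 of the paper: for a C⁴ solution `u` of the Țițeica PDE with
`w = x·u_x + y·u_y − u ≠ 0`, the pair
`P¹ = −α·y·u + u_x·(u_xy·(y·u_y − u) − y·u_x·u_yy)/w⁴` and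
`P² = −u_x·(u_xx·(y·u_y − u) − y·u_x·u_xy)/w⁴`
satisfies the conservation law `∂P¹/∂x + ∂P²/∂y = 0` on `D`. -/
theorem titeica_conservation_law (α : ℝ) (D : Set (ℝ × ℝ)) (hD : IsOpen D)
    (u : ℝ × ℝ → ℝ) (hu : ContDiffOn ℝ 4 u D)
    (hw : ∀ p ∈ D, p.1 * pdx u p + p.2 * pdy u p - u p ≠ 0)
    (hsol : ∀ p ∈ D, TiteicaPDE α u p) :
    ∀ p ∈ D,
      pdx (fun q : ℝ × ℝ =>
        -α * q.2 * u q +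
          pdx u q * (pdy (pdx u) q * (q.2 * pdy u q - u q) - q.2 * pdx u q * pdy (pdy u) q)
            / (q.1 * pdx u q + q.2 * pdy u q - u q) ^ 4) p
      + pdy (fun q : ℝ × ℝ =>
          -(pdx u q * (pdx (pdx u) q * (q.2 * pdy u q - u q) - q.2 * pdx u q * pdy (pdx u) q))
            / (q.1 * pdx u q + q.2 * pdy u q - u q) ^ 4) p
      = 0 :=
  fun p hp => titeica_conservation_law_general
    ((hu.contDiffAt (hD.mem_nhds hp)).of_le (by norm_num)) (hw p hp) (hsol p hp)
end

section
/- Let α ∈ ℝ and define L : ℝ⁸ → ℝ on the open set where x·p + y·q − u ≠ 0 by L(x,y,u,p,q,r,s,t) = u·(s² − r·t)/(x·p + y·q − u)⁴ − α·u. Then at every point of this set: (i) y·L_x − p·L_q − r·L_s − 2s·L_t = 0, and (ii) x·L_y − q·L_p − 2s·L_r − t·L_s = 0, where subscripts denote partial derivatives of L with respect to the indicated variables. -/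
/-- Partial derivative of a function on the jet space `ℝ⁸` (coordinates
`(x, y, u, p, q, r, s, t)` indexed by `0, …, 7`) with respect to the `i`-th variable. -/
noncomputable def jd (i : Fin 8) (L : (Fin 8 → ℝ) → ℝ) (v : Fin 8 → ℝ) : ℝ :=
  deriv (fun a => L (Function.update v i a)) (v i)

/-- The Țițeica Lagrangian `L(x,y,u,p,q,r,s,t) = u·(s² − r·t)/(x·p + y·q − u)⁴ − α·u`,
with jet coordinates `x = v 0`, `y = v 1`, `u = v 2`, `p = v 3`, `q = v 4`,
`r = v 5`, `s = v 6`, `t = v 7`. -/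
noncomputable def titeicaLagrangian (α : ℝ) (v : Fin 8 → ℝ) : ℝ :=
  v 2 * ((v 6) ^ 2 - v 5 * v 7) / (v 0 * v 3 + v 1 * v 4 - v 2) ^ 4 - α * v 2

/-!
The function `L` is invariant under the prolonged action of `SL(2, ℝ)`: unimodular changes of the
independent variables preserve both `x·p + y·q − u` and the Hessian determinant `r·t − s²`. If `X`
is nilpotent, then `1 + ε X` is unimodular for every `ε`, so `L` is constant along the curve of
jets `ε ↦ (1 + ε X)·v`; differentiating at `ε = 0` gives the symmetry identity for `X`. The shear
fields have zero divergence, so no term `L·Div ξ` appears.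
-/

section PartialDerivatives

variable {L : (Fin 8 → ℝ) → ℝ} {v : Fin 8 → ℝ}

lemma jd_eq_fderiv_single (hL : DifferentiableAt ℝ L v) (i : Fin 8) :
    jd i L v = fderiv ℝ L v (Pi.single i 1) := by
  have hL' : HasFDerivAt L (fderiv ℝ L v) (Function.update v i (v i)) := by
    simpa only [Function.update_eq_self] using hL.hasFDerivAt
  exact (hL'.comp_hasDerivAt (v i) (hasDerivAt_update v i (v i))).deriv

lemma fderiv_eq_sum_jd (hL : DifferentiableAt ℝ L v) (ξ : Fin 8 → ℝ) :
    fderiv ℝ L v ξ = ∑ i, ξ i * jd i L v := by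
  simp only [jd_eq_fderiv_single hL]
  conv_lhs => rw [pi_eq_sum_univ' ξ]
  simp only [map_sum, map_smul, smul_eq_mul]

lemma sum_mul_jd_eq_zero_of_comp_eq_const {γ : ℝ → Fin 8 → ℝ} {ξ : Fin 8 → ℝ} {c ε₀ : ℝ}
    (hL : DifferentiableAt ℝ L (γ ε₀)) (hγ : HasDerivAt γ ξ ε₀) (hc : ∀ ε, L (γ ε) = c) :
    ∑ i, ξ i * jd i L (γ ε₀) = 0 := by
  have hLγ : HasDerivAt (L ∘ γ) (fderiv ℝ L (γ ε₀) ξ) ε₀ := hL.hasFDerivAt.comp_hasDerivAt ε₀ hγ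
  have hconst : L ∘ γ = fun _ => c := funext hc
  rw [← fderiv_eq_sum_jd hL]
  exact hLγ.unique (hconst ▸ hasDerivAt_const ε₀ c)

end PartialDerivatives

/-- The action on second-order jets of the substitution `(x, y) ↦ A (x, y)` with `u` fixed, for
`A` of determinant one: the gradient `(p, q)` is multiplied by `B = (A⁻¹)ᵀ` and the Hessian
`H = !![r, s; s, t]` becomes `B * H * Bᵀ`. The entries of `A⁻¹` are written as those of the adjugate
of `A`, so the formula is not the jet action when `A.det ≠ 1`. -/
def unimodularProlongation (A : Matrix (Fin 2) (Fin 2) ℝ) (v : Fin 8 → ℝ) : Fin 8 → ℝ :=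
  ![A 0 0 * v 0 + A 0 1 * v 1,
    A 1 0 * v 0 + A 1 1 * v 1,
    v 2,
    A 1 1 * v 3 - A 1 0 * v 4,
    A 0 0 * v 4 - A 0 1 * v 3,
    A 1 1 ^ 2 * v 5 - 2 * (A 1 1 * A 1 0) * v 6 + A 1 0 ^ 2 * v 7,
    (A 0 0 * A 1 1 + A 0 1 * A 1 0) * v 6 - A 0 1 * A 1 1 * v 5 - A 0 0 * A 1 0 * v 7,
    A 0 1 ^ 2 * v 5 - 2 * (A 0 0 * A 0 1) * v 6 + A 0 0 ^ 2 * v 7]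

/-- The second prolongation of the linear vector field `(x, y) ↦ X (x, y)` on the plane, for `X` of
trace zero: the infinitesimal generator of `unimodularProlongation`. -/
def tracelessProlongation (X : Matrix (Fin 2) (Fin 2) ℝ) (v : Fin 8 → ℝ) : Fin 8 → ℝ :=
  ![X 0 0 * v 0 + X 0 1 * v 1,
    X 1 0 * v 0 + X 1 1 * v 1,
    0,
    X 1 1 * v 3 - X 1 0 * v 4,
    X 0 0 * v 4 - X 0 1 * v 3,
    2 * X 1 1 * v 5 - 2 * X 1 0 * v 6,
    -(X 0 1 * v 5) - X 1 0 * v 7,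
    2 * X 0 0 * v 7 - 2 * X 0 1 * v 6]

lemma unimodularProlongation_one (v : Fin 8 → ℝ) : unimodularProlongation 1 v = v := by
  ext i
  fin_cases i <;> simp [unimodularProlongation]

lemma hasDerivAt_unimodularProlongation {A : ℝ → Matrix (Fin 2) (Fin 2) ℝ}
    {X : Matrix (Fin 2) (Fin 2) ℝ} {ε₀ : ℝ} (v : Fin 8 → ℝ)
    (hA : ∀ i j, HasDerivAt (fun ε => A ε i j) (X i j) ε₀) (hA₁ : A ε₀ = 1) (hX : X.trace = 0) :
    HasDerivAt (fun ε => unimodularProlongation (A ε) v) (tracelessProlongation X v) ε₀ := by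
  have a := hA 0 0
  have b := hA 0 1
  have c := hA 1 0
  have d := hA 1 1
  rw [Matrix.trace_fin_two] at hX
  refine hasDerivAt_pi.2 fun i => ?_
  fin_cases i
  · exact (a.mul_const _).add (b.mul_const _)
  · exact (c.mul_const _).add (d.mul_const _)
  · exact hasDerivAt_const _ _
  · exact (d.mul_const _).sub (c.mul_const _)
  · exact (a.mul_const _).sub (b.mul_const _)
  · refine ((((d.pow 2).mul_const _).sub (((d.mul c).const_mul 2).mul_const _)).add
      ((c.pow 2).mul_const _)).congr_deriv ?_
    simp [tracelessProlongation, hA₁]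
  · refine (((((a.mul d).add (b.mul c)).mul_const _).sub ((b.mul d).mul_const _)).sub
      ((a.mul c).mul_const _)).congr_deriv ?_
    simp [tracelessProlongation, hA₁, hX]
  · refine ((((b.pow 2).mul_const _).sub (((a.mul b).const_mul 2).mul_const _)).add
      ((a.pow 2).mul_const _)).congr_deriv ?_
    simp only [tracelessProlongation, hA₁, Matrix.one_apply_eq,
      Matrix.one_apply_ne (zero_ne_one' (Fin 2)), Fin.reduceFinMk, Matrix.cons_val]
    ring

lemma titeicaLagrangian_unimodularProlongation (α : ℝ) {A : Matrix (Fin 2) (Fin 2) ℝ}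
    (hA : A.det = 1) (v : Fin 8 → ℝ) :
    titeicaLagrangian α (unimodularProlongation A v) = titeicaLagrangian α v := by
  set w := unimodularProlongation A v with hw
  have hu : w 2 = v 2 := rfl
  rw [Matrix.det_fin_two] at hA
  have hdenominator : w 0 * w 3 + w 1 * w 4 - w 2 = v 0 * v 3 + v 1 * v 4 - v 2 := by
    simp only [hw, unimodularProlongation, Matrix.cons_val]
    linear_combination (v 0 * v 3 + v 1 * v 4) * hA
  have hdiscriminant : w 6 ^ 2 - w 5 * w 7 = v 6 ^ 2 - v 5 * v 7 := by
    simp only [hw, unimodularProlongation, Matrix.cons_val]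
    linear_combination (v 6 ^ 2 - v 5 * v 7) * (A 0 0 * A 1 1 - A 0 1 * A 1 0 + 1) * hA
  rw [titeicaLagrangian, titeicaLagrangian, hdenominator, hdiscriminant, hu]

lemma differentiableAt_titeicaLagrangian (α : ℝ) {v : Fin 8 → ℝ}
    (hv : v 0 * v 3 + v 1 * v 4 - v 2 ≠ 0) : DifferentiableAt ℝ (titeicaLagrangian α) v := by
  unfold titeicaLagrangian
  fun_prop (disch := exact pow_ne_zero 4 hv)

lemma det_one_add_smul_of_trace_eq_zero_of_det_eq_zero {R : Type*} [CommRing R]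
    {X : Matrix (Fin 2) (Fin 2) R} (htr : X.trace = 0) (hdet : X.det = 0) (ε : R) :
    (1 + ε • X).det = 1 := by
  rw [Matrix.trace_fin_two] at htr
  rw [Matrix.det_fin_two] at hdet ⊢
  simp only [Matrix.add_apply, Matrix.smul_apply, smul_eq_mul, Matrix.one_apply_eq,
    Matrix.one_apply_ne zero_ne_one, Matrix.one_apply_ne one_ne_zero]
  linear_combination ε * htr + ε ^ 2 * hdet

lemma sum_tracelessProlongation_mul_jd_titeicaLagrangian (α : ℝ) {v : Fin 8 → ℝ}
    (hv : v 0 * v 3 + v 1 * v 4 - v 2 ≠ 0) {X : Matrix (Fin 2) (Fin 2) ℝ}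
    (htr : X.trace = 0) (hdet : X.det = 0) :
    ∑ i, tracelessProlongation X v i * jd i (titeicaLagrangian α) v = 0 := by
  let γ : ℝ → Fin 8 → ℝ := fun ε => unimodularProlongation (1 + ε • X) v
  have hγ₀ : γ 0 = v := by simp [γ, unimodularProlongation_one]
  have hγ : HasDerivAt γ (tracelessProlongation X v) 0 := by
    refine hasDerivAt_unimodularProlongation v (fun i j => ?_) (by simp) htr
    simpa using ((hasDerivAt_id (0 : ℝ)).mul_const (X i j)).const_add
      ((1 : Matrix (Fin 2) (Fin 2) ℝ) i j)
  have hinv (ε : ℝ) : titeicaLagrangian α (γ ε) = titeicaLagrangian α v :=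
    titeicaLagrangian_unimodularProlongation α
      (det_one_add_smul_of_trace_eq_zero_of_det_eq_zero htr hdet ε) v
  have hL : DifferentiableAt ℝ (titeicaLagrangian α) (γ 0) :=
    hγ₀.symm ▸ differentiableAt_titeicaLagrangian α hv
  simpa only [hγ₀] using sum_mul_jd_eq_zero_of_comp_eq_const hL hγ hinv

/-- The infinitesimal variational symmetry identities `pr²Y(L) + L·Div ξ = 0` for the
Țițeica Lagrangian and the shear fields `Y₃ = y ∂/∂x`, `Y₄ = x ∂/∂y`
(part of Theorem 10 of the paper): wherever `x·p + y·q − u ≠ 0`,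
(i) `y·L_x − p·L_q − r·L_s − 2s·L_t = 0` and (ii) `x·L_y − q·L_p − 2s·L_r − t·L_s = 0`. -/
theorem titeica_variational_symmetry_shear (α : ℝ) (v : Fin 8 → ℝ)
    (hv : v 0 * v 3 + v 1 * v 4 - v 2 ≠ 0) :
    (v 1 * jd 0 (titeicaLagrangian α) v - v 3 * jd 4 (titeicaLagrangian α) v
      - v 5 * jd 6 (titeicaLagrangian α) v - 2 * v 6 * jd 7 (titeicaLagrangian α) v = 0) ∧
    (v 0 * jd 1 (titeicaLagrangian α) v - v 4 * jd 3 (titeicaLagrangian α) v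
      - 2 * v 6 * jd 5 (titeicaLagrangian α) v - v 7 * jd 6 (titeicaLagrangian α) v = 0) := by
  have hY₃ := sum_tracelessProlongation_mul_jd_titeicaLagrangian α hv (X := !![0, 1; 0, 0])
    (by simp [Matrix.trace_fin_two_of]) (by simp [Matrix.det_fin_two_of])
  have hY₄ := sum_tracelessProlongation_mul_jd_titeicaLagrangian α hv (X := !![0, 0; 1, 0])
    (by simp [Matrix.trace_fin_two_of]) (by simp [Matrix.det_fin_two_of])
  simp only [tracelessProlongation, Fin.sum_univ_eight, Matrix.of_apply, Matrix.cons_val] at hY₃ hY₄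
  exact ⟨by linear_combination hY₃, by linear_combination hY₄⟩
end

section
/- Let α ∈ ℝ, let I ⊆ ℝ be an open interval, and let φ : ℝ → ℝ be C² on I. Define u(x,y) = φ(x·y). Then for every point (x,y) ∈ ℝ² with t = x·y ∈ I, the function u satisfies the Țițeica PDE with parameter α at (x,y) if and only if 2·t·φ'(t)·φ''(t) + φ'(t)² + α·(2·t·φ'(t) − φ(t))⁴ = 0. -/
open scoped Topology

section TwiceDifferentiable

variable {𝕜 F : Type*} [NontriviallyNormedField 𝕜] [NormedAddCommGroup F] [NormedSpace 𝕜 F]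
  {f : 𝕜 → F} {s : Set 𝕜} {t : 𝕜}

lemma eventually_hasDerivAt_deriv (hs : s ∈ 𝓝 t) (hf : DifferentiableOn 𝕜 f s) :
    ∀ᶠ r in 𝓝 t, HasDerivAt f (deriv f r) r :=
  (hf.eventually_differentiableAt hs).mono fun _ hr => hr.hasDerivAt

lemma hasDerivAt_deriv_deriv (hs : IsOpen s) (hf : ContDiffOn 𝕜 2 f s) (ht : t ∈ s) :
    HasDerivAt (deriv f) (deriv (deriv f) t) t := by
  have hderiv : ContDiffOn 𝕜 1 (deriv f) s := hf.deriv_of_isOpen hs one_add_one_eq_two.le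
  exact ((hderiv.differentiableOn one_ne_zero).differentiableAt (hs.mem_nhds ht)).hasDerivAt

end TwiceDifferentiable

lemma pdx_comp_mul (f : ℝ → ℝ) :
    pdx (fun q : ℝ × ℝ => f (q.1 * q.2)) = fun q => q.2 * deriv f (q.1 * q.2) := by
  funext q
  simpa only [pdx, smul_eq_mul, mul_comm q.2] using deriv_comp_mul_left q.2 f q.1

lemma pdy_comp_mul (f : ℝ → ℝ) :
    pdy (fun q : ℝ × ℝ => f (q.1 * q.2)) = fun q => q.1 * deriv f (q.1 * q.2) := by
  funext q
  exact deriv_comp_mul_left q.1 f q.2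

lemma pdx_comp_snd_mul (g : ℝ → ℝ) (v : ℝ × ℝ → ℝ) (p : ℝ × ℝ) :
    pdx (fun q => g q.2 * v q) p = g p.2 * pdx v p :=
  deriv_const_mul_field (v := fun x => v (x, p.2)) (g p.2)

lemma pdy_comp_fst_mul (g : ℝ → ℝ) (v : ℝ × ℝ → ℝ) (p : ℝ × ℝ) :
    pdy (fun q => g q.1 * v q) p = g p.1 * pdy v p :=
  deriv_const_mul_field (v := fun y => v (p.1, y)) (g p.1)

lemma pdy_mul_s19 {u v : ℝ × ℝ → ℝ} {p : ℝ × ℝ}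
    (hu : DifferentiableAt ℝ (fun y => u (p.1, y)) p.2)
    (hv : DifferentiableAt ℝ (fun y => v (p.1, y)) p.2) :
    pdy (fun q => u q * v q) p = pdy u p * v p + u p * pdy v p :=
  deriv_fun_mul hu hv

lemma pdx_pdx_comp_mul (f : ℝ → ℝ) (p : ℝ × ℝ) :
    pdx (pdx fun q : ℝ × ℝ => f (q.1 * q.2)) p = p.2 ^ 2 * deriv (deriv f) (p.1 * p.2) := by
  rw [pdx_comp_mul, pdx_comp_snd_mul (fun y => y), pdx_comp_mul, sq, mul_assoc]

lemma pdy_pdy_comp_mul (f : ℝ → ℝ) (p : ℝ × ℝ) :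
    pdy (pdy fun q : ℝ × ℝ => f (q.1 * q.2)) p = p.1 ^ 2 * deriv (deriv f) (p.1 * p.2) := by
  rw [pdy_comp_mul, pdy_comp_fst_mul (fun x => x), pdy_comp_mul, sq, mul_assoc]

lemma pdy_pdx_comp_mul {f : ℝ → ℝ} {p : ℝ × ℝ}
    (hf : DifferentiableAt ℝ (deriv f) (p.1 * p.2)) :
    pdy (pdx fun q : ℝ × ℝ => f (q.1 * q.2)) p =
      deriv f (p.1 * p.2) + p.1 * p.2 * deriv (deriv f) (p.1 * p.2) := by
  have hf_mul : DifferentiableAt ℝ (fun y => deriv f (p.1 * y)) p.2 :=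
    hf.comp p.2 (differentiableAt_id.const_mul p.1)
  have hpdy_snd : pdy Prod.snd p = 1 := deriv_id p.2
  rw [pdx_comp_mul, pdy_mul_s19 differentiableAt_id hf_mul, pdy_comp_mul, hpdy_snd]
  ring

lemma hessian_det_comp_mul {f : ℝ → ℝ} {p : ℝ × ℝ}
    (hf : DifferentiableAt ℝ (deriv f) (p.1 * p.2)) :
    let u := fun q : ℝ × ℝ => f (q.1 * q.2)
    pdx (pdx u) p * pdy (pdy u) p - pdy (pdx u) p ^ 2 =
      -(2 * (p.1 * p.2) * deriv f (p.1 * p.2) * deriv (deriv f) (p.1 * p.2)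
        + deriv f (p.1 * p.2) ^ 2) := by
  intro u
  rw [pdx_pdx_comp_mul, pdy_pdy_comp_mul, pdy_pdx_comp_mul hf]
  ring

lemma euler_sub_self_comp_mul (f : ℝ → ℝ) (p : ℝ × ℝ) :
    let u := fun q : ℝ × ℝ => f (q.1 * q.2)
    p.1 * pdx u p + p.2 * pdy u p - u p =
      2 * (p.1 * p.2) * deriv f (p.1 * p.2) - f (p.1 * p.2) := by
  intro u
  rw [pdx_comp_mul, pdy_comp_mul]
  ring

theorem titeica_reduction_xy_general (α : ℝ) {φ φ' : ℝ → ℝ} {φ'' : ℝ} {p : ℝ × ℝ}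
    (hφ : ∀ᶠ t in 𝓝 (p.1 * p.2), HasDerivAt φ (φ' t) t)
    (hφ' : HasDerivAt φ' φ'' (p.1 * p.2)) :
    TiteicaPDE α (fun q : ℝ × ℝ => φ (q.1 * q.2)) p ↔
      2 * (p.1 * p.2) * φ' (p.1 * p.2) * φ'' + φ' (p.1 * p.2) ^ 2
        + α * (2 * (p.1 * p.2) * φ' (p.1 * p.2) - φ (p.1 * p.2)) ^ 4 = 0 := by
  have hderiv : deriv φ =ᶠ[𝓝 (p.1 * p.2)] φ' := hφ.mono fun _ ht => ht.deriv
  have hderiv₂ : HasDerivAt (deriv φ) φ'' (p.1 * p.2) := hφ'.congr_of_eventuallyEq hderiv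
  rw [TiteicaPDE, hessian_det_comp_mul hderiv₂.differentiableAt, euler_sub_self_comp_mul,
    hderiv₂.deriv, hderiv.eq_of_nhds, neg_eq_iff_add_eq_zero]

/-- Reduction of the Țițeica PDE under the subgroup generated by
`X₁ − X₂ = x ∂/∂x − y ∂/∂y` (Section 8 of the paper): for `u(x,y) = φ(x·y)` with `φ` C² on
an open interval `I`, and for any `(x,y)` with `t = x·y ∈ I`, the Țițeica PDE holds at
`(x,y)` iff `2·t·φ'(t)·φ''(t) + φ'(t)² + α·(2·t·φ'(t) − φ(t))⁴ = 0`. -/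
theorem titeica_reduction_xy (α : ℝ) (I : Set ℝ) (hI : ∃ a b : ℝ, I = Set.Ioo a b)
    (φ : ℝ → ℝ) (hφ : ContDiffOn ℝ 2 φ I) :
    ∀ p : ℝ × ℝ, p.1 * p.2 ∈ I →
      (TiteicaPDE α (fun q : ℝ × ℝ => φ (q.1 * q.2)) p ↔
        2 * (p.1 * p.2) * deriv φ (p.1 * p.2) * deriv (deriv φ) (p.1 * p.2)
          + (deriv φ (p.1 * p.2)) ^ 2
          + α * (2 * (p.1 * p.2) * deriv φ (p.1 * p.2) - φ (p.1 * p.2)) ^ 4 = 0) := by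
  obtain ⟨a, b, rfl⟩ := hI
  exact fun p hp => titeica_reduction_xy_general α
    (eventually_hasDerivAt_deriv (isOpen_Ioo.mem_nhds hp) (hφ.differentiableOn two_ne_zero))
    (hasDerivAt_deriv_deriv isOpen_Ioo hφ hp)
end
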